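/- For every δ > 0 and every ε > 0 there exists q₀ such that for every prime power q ≥ q₀ and every real p with 1/q ≤ p ≤ q^{−4δ}, a p-random subset Q of F² satisfies a(Q) ≤ q^{1 + 2δ} · p^{1/2} with probability at least 1 − ε. -/

import Mathlib

/-!
An arc `A` is determined, up to few choices, by a small part of it, and the rest of `A` lies in a
set of size `O(q)`; a union bound over these possibilities then controls the random subset.

Fix `s` points `S ⊆ A`. No two points of `A` are collinear with a third point of `S`, so `A` is an
independent set of the graph `secantAdj S`. The `q + 1` lines through any single point cover the
plane, so by Cauchy–Schwarz every set `P` of more than `8q` points has at least `#P² / (4q)` ordered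
pairs collinear with a given `s ∈ S` (`pencil_pairs`). Since `S` is an arc, a line contains at most
two points of `S`, so these pairs are counted at most twice, and some vertex of `P` is adjacent to a
proportion `s / (8q)` of `P` (`exists_large_degree`). The Kleitman–Winston lemma
(`exists_containers`) then covers all arcs `A ⊇ S` by `(q² + 1)^t` sets of size at most `8q + t`, as
soon as `(1 - s / (8q))^t q² ≤ 8q`.

With `s = t` about `q^(1/2 + δ)` this gives at most
`q^(2s) (q² + 1)^s binom(9q, m)` arcs of size `m` (`card_arcs_le`). For `m > q^(1 + 2δ) p^(1/2)` one
has `m ≥ 81 p q`, hence `binom(9q, m) p^m ≤ e^(-m)`, and `m ≥ q^(1/2 + 2δ)` dominates `s log q`.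
So the expected number of `m`-element arcs in the random set tends to zero (`arc_union_bound`).
-/

open Finset MeasureTheory
open scoped NNReal ENNReal

/-- A set `P` in the affine plane over `F` is an arc if it contains no three
distinct collinear points. -/
def IsArc (F : Type*) [Field F] (P : Set (F × F)) : Prop :=
  ∀ a ∈ P, ∀ b ∈ P, ∀ c ∈ P,
    a ≠ b → a ≠ c → b ≠ c → ¬ Collinear F ({a, b, c} : Set (F × F))

/-- `numArcs F k` is the number of `k`-element arcs in `F²`. -/
noncomputable def numArcs (F : Type*) [Field F] [Fintype F] (k : ℕ) : ℕ :=
  Nat.card {s : Finset (F × F) // s.card = k ∧ IsArc F ↑s}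

/-- `maxArc F P` is the maximum cardinality of an arc contained in `P`. -/
noncomputable def maxArc (F : Type*) [Field F] (P : Finset (F × F)) : ℕ :=
  sSup {k : ℕ | ∃ s : Finset (F × F), s ⊆ P ∧ s.card = k ∧ IsArc F ↑s}

/-- `numCollinearTriples F P` is the number of 3-element collinear subsets of `P`. -/
noncomputable def numCollinearTriples (F : Type*) [Field F] (P : Finset (F × F)) : ℕ :=
  Nat.card {s : Finset (F × F) // s ⊆ P ∧ s.card = 3 ∧ Collinear F (↑s : Set (F × F))}

/-- `P` contains no `l` distinct collinear points. -/
def NoLCollinear (F : Type*) [Field F] (l : ℕ) (P : Finset (F × F)) : Prop :=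
  ∀ s : Finset (F × F), s ⊆ P → s.card = l → ¬ Collinear F (↑s : Set (F × F))

/-- The product Bernoulli(p) measure on subsets of `F²` (encoded as functions
`F × F → Bool`): each point is included independently with probability `p`. -/
noncomputable def randomMeasure (F : Type*) [Field F] [Fintype F] (p : ℝ≥0) (hp : p ≤ 1) :
    Measure ((F × F) → Bool) :=
  Measure.pi fun _ => (PMF.bernoulli p (by exact_mod_cast hp)).toMeasure

/-- The subset of `F²` corresponding to an indicator function `Q : F × F → Bool`. -/
noncomputable def toSubset {F : Type*} [Field F] [Fintype F] (Q : (F × F) → Bool) :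
    Finset (F × F) := Finset.univ.filter fun x => Q x = true

/-- `L` is an affine line in `F²`, i.e. the affine span of two distinct points. -/
def IsAffineLine (F : Type*) [Field F] (L : Set (F × F)) : Prop :=
  ∃ a b : F × F, a ≠ b ∧ L = (affineSpan F {a, b} : Set (F × F))


/-! ### Collinearity through determinants -/

/-- Twice the signed area of the triangle `s x y`; it vanishes exactly when the three points
are collinear. -/
def triDet {F : Type*} [Field F] (s x y : F × F) : F :=
  (x.1 - s.1) * (y.2 - s.2) - (x.2 - s.2) * (y.1 - s.1)

lemma collinear_of_triDet {F : Type*} [Field F] {s x y : F × F} (h : triDet s x y = 0) :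
    Collinear F ({s, x, y} : Set (F × F)) := by
  by_cases hx : x = s
  · subst hx
    simpa using collinear_pair F x y
  · rw [collinear_iff_of_mem (p₀ := s) (by simp)]
    refine ⟨x - s, ?_⟩
    unfold triDet at h
    have hy : ∃ r : F, y = r • (x - s) +ᵥ s := by
      by_cases h1 : x.1 - s.1 = 0
      · have h2 : x.2 - s.2 ≠ 0 := by
          intro h2
          exact hx (Prod.ext (sub_eq_zero.mp h1) (sub_eq_zero.mp h2))
        have h3 : y.1 - s.1 = 0 := by
          rw [h1] at h
          have : (x.2 - s.2) * (y.1 - s.1) = 0 := by linear_combination -h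
          exact (mul_eq_zero.mp this).resolve_left h2
        refine ⟨(y.2 - s.2) / (x.2 - s.2), Prod.ext ?_ ?_⟩
        · simp only [vadd_eq_add, Prod.fst_add, Prod.smul_fst, Prod.fst_sub, h1, smul_eq_mul]
          linear_combination h3
        · simp only [vadd_eq_add, Prod.snd_add, Prod.smul_snd, Prod.snd_sub, smul_eq_mul]
          field_simp
          ring
      · refine ⟨(y.1 - s.1) / (x.1 - s.1), Prod.ext ?_ ?_⟩
        · simp only [vadd_eq_add, Prod.fst_add, Prod.smul_fst, Prod.fst_sub, smul_eq_mul]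
          field_simp
          ring
        · simp only [vadd_eq_add, Prod.snd_add, Prod.smul_snd, Prod.snd_sub, smul_eq_mul]
          field_simp
          linear_combination h
    intro p hp
    rcases hp with rfl | rfl | rfl
    · exact ⟨0, by simp⟩
    · exact ⟨1, by simp⟩
    · exact hy

/-- Three points on the line through two distinct points `x`, `y` are collinear. -/
lemma triDet_of_common_line {F : Type*} [Field F] {x y a b c : F × F} (hxy : x ≠ y)
    (ha : triDet a x y = 0) (hb : triDet b x y = 0) (hc : triDet c x y = 0) :
    triDet a b c = 0 := by
  unfold triDet at *
  by_cases h1 : x.1 - y.1 = 0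
  · have h2 : x.2 - y.2 ≠ 0 := by
      intro h2
      exact hxy (Prod.ext (sub_eq_zero.mp h1) (sub_eq_zero.mp h2))
    have key : ∀ s : F × F,
        (x.1 - s.1) * (y.2 - s.2) - (x.2 - s.2) * (y.1 - s.1) = 0 → s.1 = x.1 := by
      intro s hs
      have : (x.2 - y.2) * (s.1 - x.1) = 0 := by linear_combination hs - (x.2 - s.2) * h1
      exact sub_eq_zero.mp ((mul_eq_zero.mp this).resolve_left h2)
    rw [key a ha, key b hb, key c hc]
    ring
  · have key : ∀ s : F × F,
        (x.1 - s.1) * (y.2 - s.2) - (x.2 - s.2) * (y.1 - s.1) = 0 →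
          s.2 = x.2 + (x.2 - y.2) / (x.1 - y.1) * (s.1 - x.1) := by
      intro s hs
      field_simp
      linear_combination -hs
    rw [key a ha, key b hb, key c hc]
    ring

/-! ### The container lemma for graphs -/

/-- Kleitman–Winston container lemma. If every vertex set of more than `k` vertices has a vertex
adjacent to a proportion `β` of it, then the independent sets inside `P` are covered by few sets of
size at most `k + t`. In the inductive step, `v` is a vertex of large degree in `P`: an independent
set either avoids `v`, or contains `v` and then lies in the non-neighbourhood of `v`, which is
smaller by the factor `1 - β`. -/
lemma exists_containers {V : Type*} [DecidableEq V] (adj : V → V → Prop) [DecidableRel adj]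
    (β : ℝ) (hβ : β ≤ 1) (k : ℕ)
    (hdeg : ∀ P : Finset V, k < #P → ∃ v ∈ P, β * #P ≤ #{y ∈ P | adj v y}) :
    ∀ (n : ℕ) (P : Finset V), #P = n → ∀ t : ℕ, (1 - β) ^ t * n ≤ k →
      ∃ 𝓕 : Finset (Finset V), #𝓕 ≤ (n + 1) ^ t ∧ (∀ C ∈ 𝓕, #C ≤ k + t) ∧
        ∀ I ⊆ P, (∀ x ∈ I, ∀ y ∈ I, ¬ adj x y) → ∃ C ∈ 𝓕, I ⊆ C := by
  intro n
  induction n using Nat.strong_induction_on with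
  | _ n ih =>
  intro P hP t ht
  by_cases hk : #P ≤ k
  · exact ⟨{P}, by simpa using Nat.one_le_pow _ _ (by omega), by simpa using by omega,
      fun I hI _ => ⟨P, by simp, hI⟩⟩
  push Not at hk
  obtain ⟨v, hv, hvdeg⟩ := hdeg P hk
  obtain _ | t := t
  · exfalso
    simp only [pow_zero, one_mul, Nat.cast_le] at ht
    omega
  have hn : 1 ≤ n := by omega
  have hβ' : 0 ≤ 1 - β := by linarith
  set P₂ := {y ∈ P.erase v | ¬ adj v y} with hP₂
  have hcard₁ : #(P.erase v) = n - 1 := by rw [card_erase_of_mem hv, hP]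
  have hcard₂ : #P₂ ≤ n - 1 := hcard₁ ▸ card_filter_le _ _
  have hcard₂' : (#P₂ : ℝ) ≤ (1 - β) * n := by
    have h1 : #P₂ ≤ #{y ∈ P | ¬ adj v y} :=
      card_le_card (filter_subset_filter _ (erase_subset _ _))
    have h2 := card_filter_add_card_filter_not (s := P) (fun y => adj v y)
    have h3 : (#P₂ : ℝ) + #{y ∈ P | adj v y} ≤ n := by
      rw [← hP]
      exact_mod_cast (by omega)
    rw [hP] at hvdeg
    linarith
  obtain ⟨𝓕₁, hF₁, hs₁, hc₁⟩ := ih (n - 1) (by omega) (P.erase v) hcard₁ (t + 1) (by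
    refine le_trans ?_ ht
    gcongr
    omega)
  obtain ⟨𝓕₂, hF₂, hs₂, hc₂⟩ := ih #P₂ (by omega) P₂ rfl t (by
    refine le_trans ?_ ht
    rw [pow_succ, mul_assoc]
    gcongr)
  refine ⟨𝓕₁ ∪ 𝓕₂.image (insert v), ?_, ?_, ?_⟩
  · have h1 : #(𝓕₁ ∪ 𝓕₂.image (insert v)) ≤ #𝓕₁ + #𝓕₂ :=
      (card_union_le _ _).trans (Nat.add_le_add_left card_image_le _)
    have h2 : #𝓕₁ ≤ n ^ (t + 1) := by rwa [Nat.sub_add_cancel hn] at hF₁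
    have h3 : #𝓕₂ ≤ n ^ t := hF₂.trans (Nat.pow_le_pow_left (by omega) _)
    calc _ ≤ n ^ (t + 1) + n ^ t := by omega
      _ = n ^ t * (n + 1) := by ring
      _ ≤ (n + 1) ^ t * (n + 1) := by gcongr; omega
      _ = _ := by ring
  · intro C hC
    rcases mem_union.mp hC with hC | hC
    · exact hs₁ C hC
    · obtain ⟨D, hD, rfl⟩ := mem_image.mp hC
      have := hs₂ D hD
      have := card_insert_le v D
      omega
  · intro I hI hind
    by_cases hvI : v ∈ I
    · obtain ⟨C, hC, hIC⟩ := hc₂ (I.erase v) (by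
        intro y hy
        have hy' := mem_erase.mp hy
        simp only [hP₂, mem_filter, mem_erase]
        exact ⟨⟨hy'.1, hI hy'.2⟩, hind v hvI y hy'.2⟩)
        (fun x hx y hy => hind x (mem_of_mem_erase hx) y (mem_of_mem_erase hy))
      refine ⟨insert v C, mem_union_right _ (mem_image_of_mem _ hC), ?_⟩
      rw [← insert_erase hvI]
      exact insert_subset_insert _ hIC
    · obtain ⟨C, hC, hIC⟩ := hc₁ I (subset_erase.mpr ⟨hI, hvI⟩) hind
      exact ⟨C, mem_union_left _ hC, hIC⟩

/-! ### Supersaturation: the graph of pairs collinear with a point of a fixed arc -/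

/-- The `q + 1` lines through `s` cover the plane, so by Cauchy–Schwarz at least `#R² / (q + 1)`
ordered pairs of points of `R` lie on a common line through `s`. -/
lemma sq_card_le_pencil {F : Type*} [Field F] [Fintype F] [DecidableEq F] (s : F × F)
    (R : Finset (F × F)) :
    #R ^ 2 ≤ (Fintype.card F + 1) * #{z ∈ R ×ˢ R | triDet s z.1 z.2 = 0} := by
  -- the slope of the line through `s` and `x`, with `none` for the vertical line
  let f : F × F → Option F := fun x =>
    if x.1 - s.1 = 0 then none else some ((x.2 - s.2) / (x.1 - s.1))
  have hf : ∀ x y, f x = f y → triDet s x y = 0 := by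
    intro x y hxy
    simp only [f] at hxy
    unfold triDet
    split_ifs at hxy with h1 h2 h2
    · rw [h1, h2]; ring
    · have := Option.some.inj hxy
      rw [div_eq_div_iff h1 h2] at this
      linear_combination -this
  have h1 : #R = ∑ d : Option F, #{x ∈ R | f x = d} :=
    card_eq_sum_card_fiberwise (fun x _ => by simp)
  have h2 : #{z ∈ R ×ˢ R | f z.1 = f z.2} = ∑ d : Option F, #{x ∈ R | f x = d} ^ 2 := by
    rw [card_eq_sum_card_fiberwise (f := fun z => f z.1) (t := univ) (fun x _ => by simp)]
    refine sum_congr rfl fun d _ => ?_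
    rw [sq, ← card_product]
    congr 1
    ext ⟨x, y⟩
    simp only [mem_filter, mem_product]
    constructor
    · rintro ⟨⟨⟨hx, hy⟩, hxy⟩, hd⟩
      exact ⟨⟨hx, hd⟩, hy, hxy ▸ hd⟩
    · rintro ⟨⟨hx, hd⟩, hy, hd'⟩
      exact ⟨⟨⟨hx, hy⟩, hd.trans hd'.symm⟩, hd⟩
  calc #R ^ 2 = (∑ d : Option F, #{x ∈ R | f x = d}) ^ 2 := by rw [← h1]
    _ ≤ #(univ : Finset (Option F)) * ∑ d : Option F, #{x ∈ R | f x = d} ^ 2 :=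
        sq_sum_le_card_mul_sum_sq
    _ = (Fintype.card F + 1) * #{z ∈ R ×ˢ R | f z.1 = f z.2} := by
        rw [h2, card_univ, Fintype.card_option]
    _ ≤ _ := by
        gcongr with z _
        exact hf _ _

/-- Two points are adjacent when they are distinct and collinear with a third point of `S`. -/
def secantAdj {F : Type*} [Field F] (S : Finset (F × F)) (x y : F × F) : Prop :=
  x ≠ y ∧ ∃ s ∈ S, s ≠ x ∧ s ≠ y ∧ triDet s x y = 0

/-- A single point `s` of the plane already produces at least `#P² / (4q)` ordered pairs of points
of `P` collinear with it. -/
lemma pencil_pairs {F : Type*} [Field F] [Fintype F] [DecidableEq F] (s : F × F)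
    (P : Finset (F × F)) (hP : 8 * Fintype.card F < #P) :
    (#P : ℝ) ^ 2 / (4 * Fintype.card F) ≤
      #{z ∈ P ×ˢ P | z.1 ≠ z.2 ∧ s ≠ z.1 ∧ s ≠ z.2 ∧ triDet s z.1 z.2 = 0} := by
  set q := Fintype.card F with hq
  have hq2 : 2 ≤ q := Fintype.one_lt_card
  set R := P.erase s with hR
  set E := {z ∈ P ×ˢ P | z.1 ≠ z.2 ∧ s ≠ z.1 ∧ s ≠ z.2 ∧ triDet s z.1 z.2 = 0} with hE
  have h1 := sq_card_le_pencil s R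
  have h2 : #{z ∈ R ×ˢ R | triDet s z.1 z.2 = 0} ≤ #E + #R := by
    have hsub : {z ∈ R ×ˢ R | triDet s z.1 z.2 = 0} ⊆ E ∪ R.image (fun x => (x, x)) := by
      rintro ⟨x, y⟩ hz
      simp only [hR, hE, mem_filter, mem_product, mem_erase, mem_union, mem_image] at hz ⊢
      by_cases hxy : x = y
      · subst hxy
        exact Or.inr ⟨x, hz.1.1, rfl⟩
      · exact Or.inl ⟨⟨hz.1.1.2, hz.1.2.2⟩, hxy, fun h => hz.1.1.1 h.symm,
          fun h => hz.1.2.1 h.symm, hz.2⟩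
    exact (card_le_card hsub).trans ((card_union_le _ _).trans (by gcongr; exact card_image_le))
  have h3 : #P ≤ #R + 1 := by
    have : #P - 1 ≤ #R := pred_card_le_card_erase
    omega
  have h4 : #R ^ 2 ≤ (q + 1) * (#E + #R) := h1.trans (by gcongr)
  have h4' : (#R : ℝ) ^ 2 ≤ (q + 1) * (#E + #R) := by exact_mod_cast h4
  have h3' : (#P : ℝ) ≤ #R + 1 := by exact_mod_cast h3
  have hP' : (8 : ℝ) * q + 1 ≤ #P := by exact_mod_cast hP
  have hq' : (2 : ℝ) ≤ q := by exact_mod_cast hq2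
  rw [div_le_iff₀ (by positivity)]
  have hr : (8 : ℝ) * q ≤ #R := by linarith
  generalize (#R : ℝ) = r at *
  generalize (#P : ℝ) = N at *
  generalize (#E : ℝ) = e at *
  generalize (q : ℝ) = Q at *
  have hNr : 16 * N ≤ 17 * r := by nlinarith
  -- `r² - (Q + 1) r` is at least `(13 / 16) r²`, and `Q + 1 ≤ (3 / 2) Q`
  have h5 : (13 / 16) * r ^ 2 ≤ (Q + 1) * e := by nlinarith
  have he : 0 ≤ e := by
    by_contra hne
    push Not at hne
    nlinarith [sq_nonneg r]
  have h6 : (13 / 16) * r ^ 2 ≤ 3 / 2 * Q * e := by nlinarith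
  have h7 : N ^ 2 * 256 ≤ 289 * r ^ 2 := by nlinarith
  nlinarith

/-- If `S` is an arc, the pencils at different points of `S` overlap at most twice,
so the degrees in `secantAdj S` grow linearly with `#S`. -/
lemma exists_large_degree {F : Type*} [Field F] [Fintype F] [DecidableEq F]
    (S : Finset (F × F)) (hS : IsArc F ↑S) [DecidableRel (secantAdj S)]
    (P : Finset (F × F)) (hP : 8 * Fintype.card F < #P) :
    ∃ v ∈ P, (#S : ℝ) / (8 * Fintype.card F) * #P ≤ #{y ∈ P | secantAdj S v y} := by
  set q := Fintype.card F with hq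
  have hq0 : (0 : ℝ) < q := by
    have : 0 < q := Fintype.card_pos
    exact_mod_cast this
  have hmult : ∀ z : F × F, ∀ w : F × F,
      #{s ∈ S | z ≠ w ∧ s ≠ z ∧ s ≠ w ∧ triDet s z w = 0} ≤ if secantAdj S z w then 2 else 0 := by
    intro z w
    split_ifs with h
    · by_contra hlt
      push Not at hlt
      obtain ⟨a, b, c, ha, hb, hc, hab, hac, hbc⟩ := two_lt_card_iff.mp hlt
      simp only [mem_filter] at ha hb hc
      exact hS a (mem_coe.mpr ha.1) b (mem_coe.mpr hb.1) c (mem_coe.mpr hc.1) hab hac hbc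
        (collinear_of_triDet (triDet_of_common_line h.1 ha.2.2.2.2 hb.2.2.2.2 hc.2.2.2.2))
    · simp only [nonpos_iff_eq_zero, card_eq_zero, filter_eq_empty_iff]
      rintro s hs ⟨h1, h2, h3, h4⟩
      exact h ⟨h1, s, hs, h2, h3, h4⟩
  have hdouble : ∑ s ∈ S, #{z ∈ P ×ˢ P | z.1 ≠ z.2 ∧ s ≠ z.1 ∧ s ≠ z.2 ∧ triDet s z.1 z.2 = 0}
      ≤ 2 * ∑ v ∈ P, #{y ∈ P | secantAdj S v y} := by
    calc _ = ∑ z ∈ P ×ˢ P, #{s ∈ S | z.1 ≠ z.2 ∧ s ≠ z.1 ∧ s ≠ z.2 ∧ triDet s z.1 z.2 = 0} := by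
          simp only [card_filter]
          exact sum_comm
      _ ≤ ∑ z ∈ P ×ˢ P, if secantAdj S z.1 z.2 then 2 else 0 := sum_le_sum fun z _ => hmult _ _
      _ = ∑ v ∈ P, ∑ y ∈ P, if secantAdj S v y then 2 else 0 := sum_product _ _ _
      _ = _ := by
          rw [mul_sum]
          refine sum_congr rfl fun v _ => ?_
          rw [card_filter, mul_sum]
          exact sum_congr rfl fun y _ => by split_ifs <;> rfl
  have hsum : (#S : ℝ) * ((#P : ℝ) ^ 2 / (4 * q)) ≤
      2 * ∑ v ∈ P, (#{y ∈ P | secantAdj S v y} : ℝ) := by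
    calc (#S : ℝ) * ((#P : ℝ) ^ 2 / (4 * q)) = ∑ s ∈ S, (#P : ℝ) ^ 2 / (4 * q) := by simp
      _ ≤ ∑ s ∈ S, (#{z ∈ P ×ˢ P |
            z.1 ≠ z.2 ∧ s ≠ z.1 ∧ s ≠ z.2 ∧ triDet s z.1 z.2 = 0} : ℝ) :=
          sum_le_sum fun s _ => pencil_pairs s P hP
      _ ≤ _ := by exact_mod_cast hdouble
  by_contra hcon
  push Not at hcon
  have hne : P.Nonempty := card_pos.mp (by omega)
  have hlt := sum_lt_sum_of_nonempty hne hcon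
  rw [sum_const, nsmul_eq_mul] at hlt
  have : (#S : ℝ) * ((#P : ℝ) ^ 2 / (4 * q)) = 2 * (#P * (#S / (8 * q) * #P)) := by
    field_simp
    ring
  linarith

/-- All arcs containing a fixed arc `S` are covered by few sets of size at most `8q + t`. -/
lemma exists_arc_containers {F : Type*} [Field F] [Fintype F]
    (S : Finset (F × F)) (hS : IsArc F ↑S) (t : ℕ) (hS8 : #S ≤ 8 * Fintype.card F)
    (ht : (1 - (#S : ℝ) / (8 * Fintype.card F)) ^ t * (Fintype.card F : ℝ) ^ 2 ≤
      8 * Fintype.card F) :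
    ∃ 𝓕 : Finset (Finset (F × F)), #𝓕 ≤ (Fintype.card F ^ 2 + 1) ^ t ∧
      (∀ C ∈ 𝓕, #C ≤ 8 * Fintype.card F + t) ∧
      ∀ A : Finset (F × F), S ⊆ A → IsArc F ↑A → ∃ C ∈ 𝓕, A ⊆ C := by
  classical
  have hq0 : (0 : ℝ) < Fintype.card F := by exact_mod_cast Fintype.card_pos
  have hcard : #(univ : Finset (F × F)) = Fintype.card F ^ 2 := by
    rw [card_univ, Fintype.card_prod, sq]
  obtain ⟨𝓕, h1, h2, h3⟩ := exists_containers (secantAdj S) ((#S : ℝ) / (8 * Fintype.card F))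
    (by rw [div_le_one (by positivity)]; exact_mod_cast hS8) (8 * Fintype.card F)
    (exists_large_degree S hS) _ univ hcard t (by push_cast; exact ht)
  refine ⟨𝓕, h1, h2, fun A hSA hA => h3 A (subset_univ _) ?_⟩
  rintro x hx y hy ⟨hxy, s, hs, hsx, hsy, hdet⟩
  exact hA s (mem_coe.mpr (hSA hs)) x (mem_coe.mpr hx) y (mem_coe.mpr hy) hsx hsy hxy
    (collinear_of_triDet hdet)

lemma IsArc.mono {F : Type*} [Field F] {A B : Set (F × F)} (hB : IsArc F B) (h : A ⊆ B) :
    IsArc F A :=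
  fun a ha b hb c hc => hB a (h ha) b (h hb) c (h hc)

open Classical in
/-- The `m`-element arcs of the affine plane over `F`. -/
noncomputable def arcFinset (F : Type*) [Field F] [Fintype F] (m : ℕ) : Finset (Finset (F × F)) :=
  (powersetCard m univ).filter fun A => IsArc F (A : Set (F × F))

lemma mem_arcFinset {F : Type*} [Field F] [Fintype F] {m : ℕ} {A : Finset (F × F)} :
    A ∈ arcFinset F m ↔ #A = m ∧ IsArc F (A : Set (F × F)) := by
  simp [arcFinset]

/-- The number of `m`-element arcs: choose an `s`-element subset, one of its containers, and an
`m`-element subset of that container. -/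
lemma card_arcs_le {F : Type*} [Field F] [Fintype F] (s t m : ℕ) (hsm : s ≤ m)
    (hs8 : s ≤ 8 * Fintype.card F)
    (ht : (1 - (s : ℝ) / (8 * Fintype.card F)) ^ t * (Fintype.card F : ℝ) ^ 2 ≤
      8 * Fintype.card F) :
    #(arcFinset F m) ≤ (Fintype.card F ^ 2) ^ s * ((Fintype.card F ^ 2 + 1) ^ t *
        (8 * Fintype.card F + t).choose m) := by
  classical
  have hex : ∀ S : Finset (F × F), ∃ 𝓕 : Finset (Finset (F × F)), S ∈ arcFinset F s →
      #𝓕 ≤ (Fintype.card F ^ 2 + 1) ^ t ∧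
      (∀ C ∈ 𝓕, #C ≤ 8 * Fintype.card F + t) ∧
      ∀ A : Finset (F × F), S ⊆ A → IsArc F ↑A → ∃ C ∈ 𝓕, A ⊆ C := by
    intro S
    by_cases hS : S ∈ arcFinset F s
    · obtain ⟨rfl, hSa⟩ := mem_arcFinset.mp hS
      obtain ⟨𝓕, h⟩ := exists_arc_containers S hSa t hs8 ht
      exact ⟨𝓕, fun _ => h⟩
    · exact ⟨∅, fun h => absurd h hS⟩
  choose 𝓕 h𝓕 using hex
  have hsub : arcFinset F m ⊆
      (arcFinset F s).biUnion fun S => (𝓕 S).biUnion fun C => powersetCard m C := by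
    intro A hA
    obtain ⟨hAm, hAa⟩ := mem_arcFinset.mp hA
    obtain ⟨S, hSA, hSs⟩ := exists_subset_card_eq (hsm.trans hAm.ge)
    have hS : S ∈ arcFinset F s :=
      mem_arcFinset.mpr ⟨hSs, hAa.mono (coe_subset.mpr hSA)⟩
    obtain ⟨C, hC, hAC⟩ := (h𝓕 S hS).2.2 A hSA hAa
    simp only [mem_biUnion, mem_powersetCard]
    exact ⟨S, hS, C, hC, hAC, hAm⟩
  have hScard : #(arcFinset F s) ≤ (Fintype.card F ^ 2) ^ s := by
    refine (card_filter_le _ _).trans ?_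
    rw [card_powersetCard, card_univ, Fintype.card_prod, ← sq]
    exact Nat.choose_le_pow _ _
  refine (card_le_card hsub).trans ((card_biUnion_le_card_mul _ _ _ fun S hS => ?_).trans
    (Nat.mul_le_mul_right _ hScard))
  refine (card_biUnion_le_card_mul _ _ _ fun C hC => ?_).trans
    (Nat.mul_le_mul_right _ (h𝓕 S hS).1)
  rw [card_powersetCard]
  exact Nat.choose_le_choose _ ((h𝓕 S hS).2.1 C hC)

/-! ### The union bound -/

lemma randomMeasure_superset {F : Type*} [Field F] [Fintype F] (p : ℝ≥0) (hp : p ≤ 1)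
    (A : Finset (F × F)) :
    randomMeasure F p hp {Q | A ⊆ toSubset Q} = (p : ℝ≥0∞) ^ #A := by
  classical
  have hset : {Q : F × F → Bool | A ⊆ toSubset Q} =
      Set.univ.pi fun x => if x ∈ A then {true} else Set.univ := by
    ext Q
    simp only [Set.mem_ofPred_eq, Set.mem_pi, Set.mem_univ, true_implies, subset_iff, toSubset,
      mem_filter, mem_univ, true_and]
    refine forall_congr' fun x => ?_
    by_cases hx : x ∈ A <;> simp [hx]
  rw [hset, randomMeasure, Measure.pi_pi]
  have : ∀ x : F × F, (PMF.bernoulli p (by exact_mod_cast hp)).toMeasure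
      (if x ∈ A then {true} else Set.univ) = if x ∈ A then (p : ℝ≥0∞) else 1 := by
    intro x
    split_ifs
    · rw [PMF.toMeasure_apply_singleton _ _ (measurableSet_singleton _)]
      rfl
    · exact measure_univ
  simp only [this]
  rw [prod_ite_mem, univ_inter, prod_const]

lemma randomMeasure_exists_arc_le {F : Type*} [Field F] [Fintype F] (p : ℝ≥0) (hp : p ≤ 1)
    (m : ℕ) :
    randomMeasure F p hp {Q | ∃ A : Finset (F × F), A ⊆ toSubset Q ∧ #A = m ∧ IsArc F ↑A} ≤
      #(arcFinset F m) * (p : ℝ≥0∞) ^ m := by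
  calc _ ≤ randomMeasure F p hp (⋃ A ∈ arcFinset F m, {Q | A ⊆ toSubset Q}) := by
        refine measure_mono ?_
        rintro Q ⟨A, hAQ, hAm, hA⟩
        simp only [Set.mem_iUnion]
        exact ⟨A, mem_arcFinset.mpr ⟨hAm, hA⟩, hAQ⟩
    _ ≤ ∑ A ∈ arcFinset F m, randomMeasure F p hp {Q | A ⊆ toSubset Q} :=
        measure_biUnion_finset_le _ _
    _ = ∑ A ∈ arcFinset F m, (p : ℝ≥0∞) ^ m := by
        refine sum_congr rfl fun A hA => ?_
        rw [randomMeasure_superset, (mem_arcFinset.mp hA).1]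
    _ = _ := by rw [sum_const, nsmul_eq_mul]

lemma exists_arc_of_le_maxArc {F : Type*} [Field F] (P : Finset (F × F)) (m : ℕ)
    (h : m ≤ maxArc F P) : ∃ A : Finset (F × F), A ⊆ P ∧ #A = m ∧ IsArc F ↑A := by
  have hmem : maxArc F P ∈ {k : ℕ | ∃ s : Finset (F × F), s ⊆ P ∧ s.card = k ∧ IsArc F ↑s} := by
    refine Nat.sSup_mem ⟨0, ∅, by simp, by simp, ?_⟩ ⟨#P, ?_⟩
    · intro a ha
      simp at ha
    · rintro k ⟨s, hs, rfl, -⟩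
      exact card_le_card hs
  obtain ⟨B, hBP, hBk, hB⟩ := hmem
  obtain ⟨A, hAB, hAm⟩ := exists_subset_card_eq (hBk ▸ h)
  exact ⟨A, hAB.trans hBP, hAm, hB.mono (coe_subset.mpr hAB)⟩

/-! ### Numerical estimates -/

lemma choose_mul_pow_le (n m : ℕ) (hm : 0 < m) (p : ℝ) (hp : 0 ≤ p)
    (h : 9 * n * p ≤ m) : (n.choose m : ℝ) * p ^ m ≤ Real.exp (-m) := by
  have hm' : (0 : ℝ) < m := by exact_mod_cast hm
  have h1 : (n.choose m : ℝ) ≤ (n : ℝ) ^ m / (m.factorial : ℝ) := Nat.choose_le_pow_div m n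
  have h2 : (m : ℝ) ^ m / (m.factorial : ℝ) ≤ Real.exp m := Real.pow_div_factorial_le_exp _ hm'.le m
  have he : Real.exp 1 * Real.exp 1 ≤ 9 := by
    have := Real.exp_one_lt_three
    nlinarith [Real.exp_pos 1]
  have hfac : (0 : ℝ) < m.factorial := by exact_mod_cast m.factorial_pos
  have h3 : (n * p) ^ m ≤ (m : ℝ) ^ m * Real.exp (-m) * Real.exp (-m) := by
    have hb : (n * p : ℝ) ≤ m * Real.exp (-1) * Real.exp (-1) := by
      rw [Real.exp_neg, ← div_eq_mul_inv, ← div_eq_mul_inv, div_div,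
        le_div_iff₀ (by positivity)]
      have : (0 : ℝ) ≤ n * p := by positivity
      nlinarith
    calc (n * p) ^ m ≤ (m * Real.exp (-1) * Real.exp (-1)) ^ m := by gcongr
      _ = _ := by
        rw [mul_pow, mul_pow, ← Real.exp_nat_mul]
        simp
  calc (n.choose m : ℝ) * p ^ m ≤ (n : ℝ) ^ m / (m.factorial : ℝ) * p ^ m := by gcongr
    _ = (n * p) ^ m / (m.factorial : ℝ) := by rw [mul_pow]; ring
    _ ≤ (m : ℝ) ^ m * Real.exp (-m) * Real.exp (-m) / (m.factorial : ℝ) := by gcongr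
    _ = (m : ℝ) ^ m / (m.factorial : ℝ) * Real.exp (-m) * Real.exp (-m) := by ring
    _ ≤ Real.exp m * Real.exp (-m) * Real.exp (-m) := by gcongr
    _ = Real.exp (-m) := by rw [← Real.exp_add]; simp

set_option maxHeartbeats 400000 in
/-- The union bound with `s = t = ⌈x ^ (1/2 + δ)⌉` in `card_arcs_le`, where `x = q`. -/
lemma arc_union_bound {F : Type*} [Field F] [Fintype F] (δ p : ℝ) (m : ℕ) (hδ : 0 < δ)
    (hδ4 : δ ≤ 1 / 4) (hp1 : p ≤ 1) (hp : 1 / (Fintype.card F : ℝ) ≤ p)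
    (h16 : 16 ≤ (Fintype.card F : ℝ)) (h81 : 81 ≤ (Fintype.card F : ℝ) ^ δ)
    (hlog : 20 * Real.log (Fintype.card F : ℝ) ≤ (Fintype.card F : ℝ) ^ δ)
    (hm : (Fintype.card F : ℝ) ^ (1 + 2 * δ) * p ^ ((1 : ℝ) / 2) ≤ m) :
    (#(arcFinset F m) : ℝ) * p ^ m ≤ Real.exp (-((Fintype.card F : ℝ) ^ δ / 2)) := by
  have hcount := card_arcs_le (F := F)
  set q := Fintype.card F with hq
  set x : ℝ := (q : ℝ) with hx
  have hx0 : 0 < x := by linarith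
  have hx1 : 1 ≤ x := by linarith
  have hp0 : 0 < p := lt_of_lt_of_le (by positivity) hp
  set X := x ^ δ with hX
  set Y := x ^ ((1 : ℝ) / 2) with hY
  have hYY : Y * Y = x := by
    rw [hY, ← Real.rpow_add hx0]
    norm_num
  have hY1 : 1 ≤ Y := Real.one_le_rpow hx1 (by norm_num)
  have hX4 : X ≤ x ^ ((1 : ℝ) / 4) := Real.rpow_le_rpow_of_exponent_le hx1 hδ4
  have hXX : x ^ (1 + 2 * δ) = x * X * X := by
    rw [show 1 + 2 * δ = 1 + δ + δ by ring, Real.rpow_add hx0, Real.rpow_add hx0, Real.rpow_one]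
  have hsqrt0 : 0 < p ^ ((1 : ℝ) / 2) := Real.rpow_pos_of_pos hp0 _
  have hsqrt1 : p ^ ((1 : ℝ) / 2) ≤ 1 := Real.rpow_le_one hp0.le hp1 (by norm_num)
  have hsqrtsq : p ^ ((1 : ℝ) / 2) * p ^ ((1 : ℝ) / 2) = p := by
    rw [← Real.rpow_add hp0]
    norm_num
  rw [hXX] at hm
  set r := p ^ ((1 : ℝ) / 2) with hr
  have hYr : 1 ≤ Y * r := by
    rw [hY, hr, ← Real.mul_rpow hx0.le hp0.le]
    refine Real.one_le_rpow ?_ (by norm_num)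
    rw [div_le_iff₀ hx0] at hp
    linarith
  have hm1 : Y * X * X ≤ m := by
    refine le_trans ?_ hm
    have : Y ≤ x * r := by
      rw [← hYY]
      nlinarith
    calc Y * X * X ≤ x * r * X * X := by gcongr
      _ = _ := by ring
  have hm2 : 81 * x * p ≤ m := by
    refine le_trans ?_ hm
    rw [← hsqrtsq]
    have h1 : 81 * r ≤ X * X := by nlinarith
    calc 81 * x * (r * r) = (81 * r) * (x * r) := by ring
      _ ≤ X * X * (x * r) := by gcongr
      _ = _ := by ring
  have hXY1 : 1 ≤ Y * X := by nlinarith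
  set s := ⌈Y * X⌉₊ with hs
  have hs1 : Y * X ≤ s := Nat.le_ceil _
  have hs2 : (s : ℝ) ≤ 2 * (Y * X) := by
    have := Nat.ceil_lt_add_one (show 0 ≤ Y * X by linarith)
    linarith
  have hsm : s ≤ m := by
    have : (s : ℝ) ≤ m := by nlinarith
    exact_mod_cast this
  have hsq' : (s : ℝ) ≤ x := by
    set Z := x ^ ((1 : ℝ) / 4) with hZ
    have hZZ : Z * Z = Y := by
      rw [hZ, hY, ← Real.rpow_add hx0]
      norm_num
    have hZ0 : 0 < Z := Real.rpow_pos_of_pos hx0 _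
    have hZ2 : 2 ≤ Z := by
      by_contra hlt
      push Not at hlt
      have : Y < 4 := by nlinarith
      nlinarith
    calc (s : ℝ) ≤ 2 * (Y * X) := hs2
      _ ≤ Z * (Y * Z) := by gcongr
      _ = x := by rw [← hYY, ← hZZ]; ring
  have hsq : s ≤ q := (Nat.cast_le (α := ℝ)).mp hsq'
  have hlog0 : 0 ≤ Real.log x := Real.log_nonneg hx1
  have hcond : (1 - (s : ℝ) / (8 * x)) ^ s * x ^ 2 ≤ 8 * x := by
    have h1 : 1 - (s : ℝ) / (8 * x) ≤ Real.exp (-((s : ℝ) / (8 * x))) := by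
      have := Real.add_one_le_exp (-((s : ℝ) / (8 * x)))
      linarith
    have h0 : 0 ≤ 1 - (s : ℝ) / (8 * x) := by
      rw [sub_nonneg, div_le_one (by positivity)]
      linarith
    have h2 : (1 - (s : ℝ) / (8 * x)) ^ s ≤ Real.exp (-Real.log x) := by
      calc _ ≤ Real.exp (-((s : ℝ) / (8 * x))) ^ s := by gcongr
        _ = Real.exp (s * (-((s : ℝ) / (8 * x)))) := (Real.exp_nat_mul _ _).symm
        _ ≤ _ := by
          apply Real.exp_le_exp.mpr
          have h3 : x * X * X ≤ s * s := by
            calc x * X * X = (Y * X) * (Y * X) := by rw [← hYY]; ring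
              _ ≤ s * s := by gcongr
          have h4 : Real.log x * (8 * x) ≤ s * s := by
            refine le_trans ?_ h3
            have hXle : X ≤ X * X := le_mul_of_one_le_right (by linarith) (by linarith)
            have : Real.log x * 8 ≤ X * X := by linarith
            calc Real.log x * (8 * x) = x * (Real.log x * 8) := by ring
              _ ≤ x * (X * X) := by gcongr
              _ = x * X * X := by ring
          have h5 : Real.log x ≤ s * s / (8 * x) := by
            rwa [le_div_iff₀ (by positivity)]
          have h6 : (s : ℝ) * (-((s : ℝ) / (8 * x))) = -(s * s / (8 * x)) := by ring
          linarith
    rw [Real.exp_neg, Real.exp_log hx0] at h2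
    calc _ ≤ x⁻¹ * x ^ 2 := by gcongr
      _ = x := by field_simp
      _ ≤ 8 * x := by linarith
  have hcard := hcount s s m hsm (by omega) hcond
  have hcard' : (#(arcFinset F m) : ℝ) ≤
      (x ^ 2) ^ s * ((x ^ 2 + 1) ^ s * ((8 * q + s).choose m : ℝ)) := by
    rw [hx]
    exact_mod_cast hcard
  have hm0 : 0 < m := by
    have : (0 : ℝ) < m := lt_of_lt_of_le (by positivity) hm1
    exact_mod_cast this
  have hchoose : ((8 * q + s).choose m : ℝ) * p ^ m ≤ Real.exp (-m) := by
    refine choose_mul_pow_le _ _ hm0 p hp0.le (le_trans ?_ hm2)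
    push_cast
    have : 8 * x + s ≤ 9 * x := by linarith
    nlinarith
  have hpoly : (x ^ 2) ^ s * (x ^ 2 + 1) ^ s ≤ Real.exp (5 * s * Real.log x) := by
    calc (x ^ 2) ^ s * (x ^ 2 + 1) ^ s = (x ^ 2 * (x ^ 2 + 1)) ^ s := (mul_pow _ _ _).symm
      _ ≤ (x ^ 5) ^ s := by
        gcongr
        have : x ^ 2 + 1 ≤ x ^ 3 := by nlinarith [sq_nonneg x]
        calc x ^ 2 * (x ^ 2 + 1) ≤ x ^ 2 * x ^ 3 := by gcongr
          _ = x ^ 5 := by ring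
      _ = Real.exp (Real.log x) ^ (5 * s) := by rw [Real.exp_log hx0, pow_mul]
      _ = _ := by
        rw [← Real.exp_nat_mul]
        push_cast
        rfl
  calc (#(arcFinset F m) : ℝ) * p ^ m
      ≤ ((x ^ 2) ^ s * ((x ^ 2 + 1) ^ s * ((8 * q + s).choose m : ℝ))) * p ^ m := by gcongr
    _ = ((x ^ 2) ^ s * (x ^ 2 + 1) ^ s) * (((8 * q + s).choose m : ℝ) * p ^ m) := by ring
    _ ≤ Real.exp (5 * s * Real.log x) * Real.exp (-m) := by gcongr
    _ = Real.exp (5 * s * Real.log x - m) := by rw [← Real.exp_add, sub_eq_add_neg]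
    _ ≤ _ := by
      apply Real.exp_le_exp.mpr
      have h1 : 5 * s * Real.log x ≤ Y * X * X / 2 := by
        calc 5 * s * Real.log x ≤ 5 * (2 * (Y * X)) * Real.log x := by gcongr
          _ = (Y * X) * (20 * Real.log x) / 2 := by ring
          _ ≤ (Y * X) * X / 2 := by gcongr
      have h2 : X ≤ Y * X * X := by nlinarith
      linarith

theorem random_arc_upper_large_p :
    ∀ δ ε : ℝ, 0 < δ → 0 < ε → ∃ q₀ : ℕ,
      ∀ (F : Type) [Field F] [Fintype F], q₀ ≤ Fintype.card F →
      ∀ (p : ℝ≥0) (hp : p ≤ 1),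
      1 / (Fintype.card F : ℝ) ≤ (p : ℝ) →
      (p : ℝ) ≤ (Fintype.card F : ℝ) ^ (-(4 : ℝ) * δ) →
      1 - ENNReal.ofReal ε ≤
        randomMeasure F p hp
          {Q | (maxArc F (toSubset Q) : ℝ) ≤
            (Fintype.card F : ℝ) ^ ((1 : ℝ) + 2 * δ) * (p : ℝ) ^ ((1 : ℝ) / 2)} := by
  intro δ ε hδ hε
  have hcast := tendsto_natCast_atTop_atTop (R := ℝ)
  have hpow := (tendsto_rpow_atTop hδ).comp hcast
  have hlog : ∀ᶠ n : ℕ in Filter.atTop, 20 * Real.log (n : ℝ) ≤ (n : ℝ) ^ δ := by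
    have h := hcast.eventually ((isLittleO_log_rpow_atTop hδ).bound
      (show (0 : ℝ) < 1 / 20 by norm_num))
    filter_upwards [h, Filter.eventually_ge_atTop 1] with n hn hn1
    have hn1' : (1 : ℝ) ≤ n := by exact_mod_cast hn1
    rw [Real.norm_of_nonneg (Real.log_nonneg hn1'),
      Real.norm_of_nonneg (by positivity)] at hn
    linarith
  obtain ⟨q₀, hq₀⟩ := Filter.eventually_atTop.mp
    (((Filter.eventually_ge_atTop 16).and hlog).and
      ((hpow.eventually_ge_atTop 81).and (hpow.eventually_ge_atTop (-2 * Real.log ε))))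
  refine ⟨q₀, fun F _ _ hF p hp hp1 hp2 => ?_⟩
  obtain ⟨⟨h16, hlogq⟩, h81, hεq⟩ := hq₀ _ hF
  simp only [Function.comp_apply] at h81 hεq
  have h16' : (16 : ℝ) ≤ Fintype.card F := by exact_mod_cast h16
  -- the range of `p` is empty unless `δ ≤ 1 / 4`
  have hδ4 : δ ≤ 1 / 4 := by
    have h := hp1.trans hp2
    rw [one_div, ← Real.rpow_neg_one,
      Real.rpow_le_rpow_left_iff (by linarith : (1 : ℝ) < Fintype.card F)] at h
    linarith
  set B := (Fintype.card F : ℝ) ^ ((1 : ℝ) + 2 * δ) * (p : ℝ) ^ ((1 : ℝ) / 2) with hB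
  have hB0 : 0 ≤ B := by positivity
  have hbound := arc_union_bound (F := F) δ p (⌊B⌋₊ + 1) hδ hδ4 (by exact_mod_cast hp) hp1 h16' h81
    hlogq (by push_cast; exact (Nat.lt_floor_add_one B).le)
  have hexp : Real.exp (-((Fintype.card F : ℝ) ^ δ / 2)) ≤ ε := by
    rw [← Real.le_log_iff_exp_le hε]
    linarith
  have : IsProbabilityMeasure (randomMeasure F p hp) := by
    unfold randomMeasure
    infer_instance
  set G := {Q : F × F → Bool | (maxArc F (toSubset Q) : ℝ) ≤ B} with hG
  have hbad : randomMeasure F p hp Gᶜ ≤ ENNReal.ofReal ε := by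
    calc randomMeasure F p hp Gᶜ ≤ randomMeasure F p hp
          {Q | ∃ A : Finset (F × F), A ⊆ toSubset Q ∧ #A = ⌊B⌋₊ + 1 ∧ IsArc F ↑A} := by
          refine measure_mono fun Q hQ => exists_arc_of_le_maxArc _ _ ?_
          simp only [hG, Set.mem_compl_iff, Set.mem_ofPred_eq, not_le] at hQ
          exact Nat.succ_le_of_lt ((Nat.floor_lt hB0).mpr hQ)
      _ ≤ #(arcFinset F (⌊B⌋₊ + 1)) * (p : ℝ≥0∞) ^ (⌊B⌋₊ + 1) :=
          randomMeasure_exists_arc_le p hp _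
      _ = ENNReal.ofReal (#(arcFinset F (⌊B⌋₊ + 1)) * (p : ℝ) ^ (⌊B⌋₊ + 1)) := by
          rw [ENNReal.ofReal_mul (by positivity), ENNReal.ofReal_natCast,
            ENNReal.ofReal_pow p.coe_nonneg, ENNReal.ofReal_coe_nnreal]
      _ ≤ ENNReal.ofReal ε := ENNReal.ofReal_le_ofReal (hbound.trans hexp)
  have hone : 1 ≤ randomMeasure F p hp G + randomMeasure F p hp Gᶜ := by
    rw [← measure_univ (μ := randomMeasure F p hp), ← Set.union_compl_self G]
    exact measure_union_le _ _
  rw [tsub_le_iff_right]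
  exact hone.trans (by gcongr)
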